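/- Consider n agents with capacities C_1, …, C_n > 0 and independent values V_1, …, V_n, where V_i has CDF F_i, density f_i > 0, and finite mean. For every BIC n-agent two-priced auction, the expected revenue Σ_i E[ V_i·(q_{v,i}(V_i) + q_{c,i}(V_i)) − C_i·q_{c,i}(V_i) ] is at most 2·E[ max_i φ_i⁺(V_i) ] + E[ max_i max(V_i − C_i, 0) ], where φ_i(v) = v − (1 − F_i(v))/f_i(v) and φ_i⁺(v) = max(φ_i(v), 0). In particular the expected revenue is at most 3·max( E[max_i φ_i⁺(V_i)], E[max_i max(V_i − C_i, 0)] ). -/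

import Mathlib

open MeasureTheory Set

/-!
Write `q = qv + qc`, let `payment x v = v * x v - ∫₀ᵛ x` be the price at which a risk-neutral agent
truthfully buys the allocation `x`, and call `C * qc v` the utility of the agent with value `v`.
Incentive compatibility says that utility is nondecreasing with slope at least `qv`, and that `qv`
never exceeds later values of `q`.

The revenue `v * q v - C * qc v` exceeds `payment q v` by `∫₀ᵛ q - C * qc v`. Below the capacity,
the part `∫ qv` of this excess is paid for by utility, while `∫ qc` is controlled by integrating
the utility bound a second time; the error is at most the payment for the running supremum of `qv`
scaled by `min v C / C`, an allocation that is again dominated by `q`. Above the capacity the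
excess is at most `(v - C) * q v`.

So revenue is dominated by two risk-neutral payments and one surplus. Each expected payment is at
most the expected virtual surplus, and feasibility bounds the total over the agents of each of the
three terms by the corresponding expected maximum.
-/

namespace TwoPricedAuction

/-- A measurable probability of service, as a function of a type or of a profile of types. -/
structure IsAllocationRule {α : Type*} [MeasurableSpace α] (x : α → ℝ) : Prop where
  measurable : Measurable x
  nonneg : ∀ a, 0 ≤ x a
  le_one : ∀ a, x a ≤ 1

namespace IsAllocationRule

variable {α : Type*} [MeasurableSpace α] {x : α → ℝ} {μ : Measure α}

theorem integrable_mul (hx : IsAllocationRule x) {g : α → ℝ} (hg : Integrable g μ) :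
    Integrable (fun a => g a * x a) μ :=
  hg.mul_bdd (c := 1) hx.measurable.aestronglyMeasurable <| .of_forall fun a => by
    simpa only [Real.norm_of_nonneg (hx.nonneg a)] using hx.le_one a

theorem integrable (hx : IsAllocationRule x) [IsFiniteMeasure μ] : Integrable x μ := by
  simpa only [one_mul] using hx.integrable_mul (integrable_const (μ := μ) (1 : ℝ))

theorem comp (hx : IsAllocationRule x) {β : Type*} [MeasurableSpace β] {r : β → α}
    (hr : Measurable r) : IsAllocationRule fun b => x (r b) :=
  ⟨hx.measurable.comp hr, fun b => hx.nonneg (r b), fun b => hx.le_one (r b)⟩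

theorem integral_mem_Icc (hx : IsAllocationRule x) [IsProbabilityMeasure μ] :
    ∫ a, x a ∂μ ∈ Icc (0 : ℝ) 1 := by
  refine ⟨integral_nonneg hx.nonneg, ?_⟩
  simpa using integral_mono (hx.integrable (μ := μ)) (integrable_const (1 : ℝ)) hx.le_one

theorem of_sum_le_one {ι : Type*} [Fintype ι] {P : ι → α → ℝ} (hm : ∀ i, Measurable (P i))
    (h0 : ∀ i a, 0 ≤ P i a) (hsum : ∀ a, ∑ i, P i a ≤ 1) (i : ι) : IsAllocationRule (P i) :=
  ⟨hm i, h0 i, fun a =>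
    (Finset.single_le_sum (fun j _ => h0 j a) (Finset.mem_univ i)).trans (hsum a)⟩

theorem intervalIntegrable {x : ℝ → ℝ} (hx : IsAllocationRule x) (a b : ℝ) :
    IntervalIntegrable x volume a b :=
  ⟨hx.integrable, hx.integrable⟩

end IsAllocationRule

/-- Myerson's payment: what a risk-neutral agent with value `v` pays on average under a truthful
mechanism with allocation rule `x` in which value `0` pays nothing. -/
noncomputable def payment (x : ℝ → ℝ) (v : ℝ) : ℝ := v * x v - ∫ s in (0 : ℝ)..v, x s

theorem mul_payment_le {a b : ℝ → ℝ} {v : ℝ} (hv : 0 ≤ v) (ha : ∀ s ∈ Icc 0 v, a s ≤ a v)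
    (hb0 : ∀ s ∈ Icc 0 v, 0 ≤ b s) (hb : IntervalIntegrable b volume 0 v)
    (hab : IntervalIntegrable (fun s => a s * b s) volume 0 v) :
    a v * payment b v ≤ payment (fun s => a s * b s) v := by
  have hle : ∫ s in (0 : ℝ)..v, a s * b s ≤ ∫ s in (0 : ℝ)..v, a v * b s :=
    intervalIntegral.integral_mono_on hv hab (hb.const_mul _) fun s hs =>
      mul_le_mul_of_nonneg_right (ha s hs) (hb0 s hs)
  rw [intervalIntegral.integral_const_mul] at hle
  simp only [payment]
  linarith

/-- The allocation probability that climbs linearly from `0` at value `0` to `1` at the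
capacity `C`. -/
noncomputable def ramp (C v : ℝ) : ℝ := max 0 (min v C) / C

theorem continuous_ramp (C : ℝ) : Continuous (ramp C) := by
  unfold ramp
  fun_prop

theorem isAllocationRule_ramp {C : ℝ} (hC : 0 < C) : IsAllocationRule (ramp C) :=
  ⟨(continuous_ramp C).measurable, fun _ => div_nonneg (le_max_left _ _) hC.le, fun _ =>
    (div_le_one hC).2 (max_le hC.le (min_le_right _ _))⟩

theorem payment_ramp {C v : ℝ} (hC : 0 < C) (hv : 0 ≤ v) :
    payment (ramp C) v = min v C ^ 2 / (2 * C) := by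
  have hm : 0 ≤ min v C := le_min hv hC.le
  have hi : ∀ a b, IntervalIntegrable (ramp C) volume a b :=
    (isAllocationRule_ramp hC).intervalIntegrable
  have hlow : ∫ s in (0 : ℝ)..min v C, ramp C s = ∫ s in (0 : ℝ)..min v C, s / C :=
    intervalIntegral.integral_congr fun s hs => by
      rw [uIcc_of_le hm] at hs
      rw [ramp, min_eq_left (hs.2.trans (min_le_right _ _)), max_eq_right hs.1]
  have hhigh : ∫ s in min v C..v, ramp C s = ∫ _ in min v C..v, min v C / C :=
    intervalIntegral.integral_congr fun s hs => by
      rw [uIcc_of_le (min_le_left _ _)] at hs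
      have : min s C = min v C :=
        le_antisymm (min_le_min_right C hs.2) (le_min hs.1 (min_le_right _ _))
      rw [ramp, this, max_eq_right hm]
  rw [payment, ← intervalIntegral.integral_add_adjacent_intervals (hi 0 (min v C)) (hi _ v), hlow,
    hhigh, intervalIntegral.integral_div, integral_id, intervalIntegral.integral_const, smul_eq_mul,
    ramp, max_eq_right hm]
  field_simp
  ring

/-- The supremum of `q` over `[0, v]`; it is `0` when `v < 0`. -/
noncomputable def runningSup (q : ℝ → ℝ) (v : ℝ) : ℝ := ⨆ s : Icc (0 : ℝ) v, q s

theorem le_runningSup {q : ℝ → ℝ} (hq : BddAbove (range q)) {s v : ℝ} (hs : 0 ≤ s) (hsv : s ≤ v) :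
    q s ≤ runningSup q v :=
  le_ciSup (hq.mono (range_comp_subset_range Subtype.val q)) (⟨s, hs, hsv⟩ : Icc (0 : ℝ) v)

theorem runningSup_nonneg {q : ℝ → ℝ} (hq0 : ∀ t, 0 ≤ q t) (v : ℝ) : 0 ≤ runningSup q v :=
  Real.iSup_nonneg fun s => hq0 s

theorem monotone_runningSup {q : ℝ → ℝ} (hq : BddAbove (range q)) (hq0 : ∀ t, 0 ≤ q t) :
    Monotone (runningSup q) := fun _ v huv =>
  Real.iSup_le (fun s => le_runningSup hq s.2.1 (s.2.2.trans huv)) (runningSup_nonneg hq0 v)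

/-- `u` has a derivative almost everywhere, which dominates `g` and integrates to at most the
increment of `u`. -/
theorem intervalIntegral_le_sub_of_monotoneOn {u g : ℝ → ℝ} {a b : ℝ} (hab : a ≤ b)
    (hu : MonotoneOn u (Icc a b)) (hg : IntervalIntegrable g volume a b)
    (hgu : ∀ x ∈ Ioo a b, ∀ᶠ y in nhdsWithin x (Ioi x), u x + g x * (y - x) ≤ u y) :
    ∫ s in a..b, g s ≤ u b - u a := by
  have hu' : MonotoneOn u (uIcc a b) := by rwa [uIcc_of_le hab]
  have hderiv := hu'.intervalIntegral_deriv_mem_uIcc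
  rw [uIcc_of_le (sub_nonneg.2 (hu (left_mem_Icc.2 hab) (right_mem_Icc.2 hab) hab))] at hderiv
  refine le_trans ?_ hderiv.2
  refine intervalIntegral.integral_mono_ae_restrict hab hg hu'.intervalIntegrable_deriv ?_
  rw [Filter.EventuallyLE, ← restrict_Ioo_eq_restrict_Icc, ae_restrict_iff' measurableSet_Ioo]
  filter_upwards [hu.ae_differentiableWithinAt_of_mem] with x hx hxab
  have hdiff : HasDerivAt u (deriv u x) x :=
    ((hx (Ioo_subset_Icc_self hxab)).differentiableAt (Icc_mem_nhds hxab.1 hxab.2)).hasDerivAt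
  have hslope := (hasDerivAt_iff_tendsto_slope.1 hdiff).mono_left
    (nhdsWithin_mono x (fun y hy => ne_of_gt hy : Ioi x ⊆ {x}ᶜ))
  refine ge_of_tendsto hslope ?_
  filter_upwards [hgu x hxab, self_mem_nhdsWithin] with y hy hxy
  rw [slope_def_field, le_div_iff₀ (sub_pos.2 hxy)]
  linarith

/-- Bayesian incentive compatibility of the two-priced mechanism that serves value `v` at price `v`
with probability `qv v` and at price `v - C` with probability `qc v`; the agent's utility for a
surplus `w` is `min w C`. -/
def IsTwoPricedBIC (C : ℝ) (qv qc : ℝ → ℝ) : Prop :=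
  ∀ v, 0 ≤ v → ∀ v', 0 ≤ v' →
    qv v * min 0 C + qc v * C ≥ qv v' * min (v - v') C + qc v' * min (v - v' + C) C

namespace IsTwoPricedBIC

variable {C : ℝ} {qv qc : ℝ → ℝ}

theorem utility_add_le (h : IsTwoPricedBIC C qv qc) (hC : 0 ≤ C) {v v' : ℝ} (hv' : 0 ≤ v')
    (hle : v' ≤ v) (hvC : v - v' ≤ C) : C * qc v' + qv v' * (v - v') ≤ C * qc v := by
  have := h v (hv'.trans hle) v' hv'
  rw [min_eq_left hC, min_eq_left hvC, min_eq_right (by linarith)] at this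
  linarith

theorem monotoneOn_qc (h : IsTwoPricedBIC C qv qc) (hC : 0 < C) (hqv : ∀ t, 0 ≤ qv t) :
    MonotoneOn qc (Ici 0) := by
  intro a ha b hb hab
  have hbic := h b hb a ha
  rw [min_eq_left hC.le, min_eq_right (a := b - a + C) (by linarith)] at hbic
  have : 0 ≤ qv a * min (b - a) C := mul_nonneg (hqv a) (le_min (sub_nonneg.2 hab) hC.le)
  exact le_of_mul_le_mul_right (by linarith) hC

/-- Nearby values deter each other's deviations, which compares the two slopes of the utility;
across more than a capacity, the upward deviation alone suffices. -/
theorem qv_le_add (h : IsTwoPricedBIC C qv qc) (hC : 0 < C) (hqv : ∀ t, 0 ≤ qv t)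
    (hqc : ∀ t, 0 ≤ qc t) {v v' : ℝ} (hv' : 0 ≤ v') (hle : v' ≤ v) : qv v' ≤ qv v + qc v := by
  rcases hle.eq_or_lt with rfl | hlt
  · exact le_add_of_nonneg_right (hqc v')
  rcases le_total (v - v') C with hnear | hfar
  · have hup := h.utility_add_le hC.le hv' hle hnear
    have hdown := h v' hv' v (hv'.trans hle)
    rw [min_eq_left hC.le, min_eq_left (by linarith), min_eq_left (by linarith)] at hdown
    exact le_of_mul_le_mul_left (by linarith) (sub_pos.2 hlt)
  · have hup := h v (hv'.trans hle) v' hv'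
    rw [min_eq_left hC.le, min_eq_right hfar, min_eq_right (by linarith)] at hup
    exact le_of_mul_le_mul_right
      (by linarith [mul_nonneg hC.le (hqv v), mul_nonneg hC.le (hqc v')]) hC

theorem integral_qv_le (h : IsTwoPricedBIC C qv qc) (hC : 0 < C) (hqv : IsAllocationRule qv)
    {a b : ℝ} (ha : 0 ≤ a) (hab : a ≤ b) : ∫ s in a..b, qv s ≤ C * qc b - C * qc a := by
  have hmono := h.monotoneOn_qc hC hqv.nonneg
  refine intervalIntegral_le_sub_of_monotoneOn (u := fun t => C * qc t) hab
    (fun x hx y hy hxy => mul_le_mul_of_nonneg_left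
      (hmono (ha.trans hx.1) (ha.trans hy.1) hxy) hC.le) (hqv.intervalIntegrable a b)
    fun x hx => ?_
  filter_upwards [Ioo_mem_nhdsGT (lt_add_of_pos_right x hC)] with y hy
  exact h.utility_add_le hC.le (ha.trans hx.1.le) hy.1.le (by linarith [hy.2])

end IsTwoPricedBIC

/-- A single agent's BIC two-priced mechanism. -/
structure IsBICMechanism (C : ℝ) (qv qc : ℝ → ℝ) : Prop where
  capacity_pos : 0 < C
  isAllocationRule_v : IsAllocationRule qv
  isAllocationRule_c : IsAllocationRule qc
  add_le_one : ∀ t, qv t + qc t ≤ 1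
  bic : IsTwoPricedBIC C qv qc

/-- The second of the two risk-neutral allocation rules whose payments cover the revenue of a
two-priced mechanism; the first is `qv + qc`. -/
noncomputable def auxRule (C : ℝ) (qv : ℝ → ℝ) (v : ℝ) : ℝ := runningSup qv v * ramp C v

namespace IsBICMechanism

variable {C : ℝ} {qv qc : ℝ → ℝ}

theorem isAllocationRule_add (h : IsBICMechanism C qv qc) :
    IsAllocationRule fun t => qv t + qc t :=
  ⟨h.isAllocationRule_v.measurable.add h.isAllocationRule_c.measurable,
    fun t => add_nonneg (h.isAllocationRule_v.nonneg t) (h.isAllocationRule_c.nonneg t),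
    h.add_le_one⟩

theorem bddAbove_range_qv (h : IsBICMechanism C qv qc) : BddAbove (range qv) :=
  ⟨1, forall_mem_range.2 h.isAllocationRule_v.le_one⟩

theorem runningSup_le_add (h : IsBICMechanism C qv qc) (v : ℝ) :
    runningSup qv v ≤ qv v + qc v :=
  Real.iSup_le (fun s => h.bic.qv_le_add h.capacity_pos h.isAllocationRule_v.nonneg
    h.isAllocationRule_c.nonneg s.2.1 s.2.2) (h.isAllocationRule_add.nonneg v)

theorem auxRule_le_add (h : IsBICMechanism C qv qc) (v : ℝ) : auxRule C qv v ≤ qv v + qc v :=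
  (mul_le_of_le_one_right (runningSup_nonneg h.isAllocationRule_v.nonneg v)
    ((isAllocationRule_ramp h.capacity_pos).le_one v)).trans (h.runningSup_le_add v)

theorem isAllocationRule_auxRule (h : IsBICMechanism C qv qc) :
    IsAllocationRule (auxRule C qv) where
  measurable := (monotone_runningSup h.bddAbove_range_qv h.isAllocationRule_v.nonneg).measurable.mul
    (continuous_ramp C).measurable
  nonneg t := mul_nonneg (runningSup_nonneg h.isAllocationRule_v.nonneg t)
    ((isAllocationRule_ramp h.capacity_pos).nonneg t)
  le_one t := (h.auxRule_le_add t).trans (h.add_le_one t)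

theorem le_payment_auxRule (h : IsBICMechanism C qv qc) {v : ℝ} (hv : 0 ≤ v) :
    runningSup qv v * (min v C ^ 2 / (2 * C)) ≤ payment (auxRule C qv) v := by
  have hramp := isAllocationRule_ramp h.capacity_pos
  rw [← payment_ramp h.capacity_pos hv]
  exact mul_payment_le hv
    (fun s hs => monotone_runningSup h.bddAbove_range_qv h.isAllocationRule_v.nonneg hs.2)
    (fun s _ => hramp.nonneg s) (hramp.intervalIntegrable 0 v)
    (h.isAllocationRule_auxRule.intervalIntegrable 0 v)

theorem integral_qc_le (h : IsBICMechanism C qv qc) {m β : ℝ} (hm : 0 ≤ m)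
    (hβ : ∀ s ∈ Icc 0 m, qv s ≤ β) :
    C * ∫ s in (0 : ℝ)..m, qc s ≤ m * (C * qc m - ∫ s in (0 : ℝ)..m, qv s) + β * (m ^ 2 / 2) := by
  have hiv := h.isAllocationRule_v.intervalIntegrable
  set K := C * qc m - ∫ s in (0 : ℝ)..m, qv s
  have hutility : ∀ s ∈ Icc 0 m, C * qc s ≤ K + β * s := by
    intro s hs
    have hlate := h.bic.integral_qv_le h.capacity_pos h.isAllocationRule_v hs.1 hs.2
    have hsplit := intervalIntegral.integral_add_adjacent_intervals (hiv 0 s) (hiv s m)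
    have hearly : ∫ t in (0 : ℝ)..s, qv t ≤ ∫ _ in (0 : ℝ)..s, β :=
      intervalIntegral.integral_mono_on hs.1 (hiv 0 s) intervalIntegrable_const
        fun t ht => hβ t ⟨ht.1, ht.2.trans hs.2⟩
    rw [intervalIntegral.integral_const, smul_eq_mul, sub_zero] at hearly
    linarith
  have hlin : IntervalIntegrable (fun s => β * s) volume 0 m :=
    (continuous_const_mul β).intervalIntegrable 0 m
  calc C * ∫ s in (0 : ℝ)..m, qc s = ∫ s in (0 : ℝ)..m, C * qc s :=
        (intervalIntegral.integral_const_mul _ _).symm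
    _ ≤ ∫ s in (0 : ℝ)..m, (K + β * s) :=
        intervalIntegral.integral_mono_on hm
          ((h.isAllocationRule_c.intervalIntegrable 0 m).const_mul C)
          (intervalIntegrable_const.add hlin) hutility
    _ = m * K + β * (m ^ 2 / 2) := by
        rw [intervalIntegral.integral_add intervalIntegrable_const hlin,
          intervalIntegral.integral_const, intervalIntegral.integral_const_mul, integral_id]
        simp only [smul_eq_mul, sub_zero, ne_eq, OfNat.ofNat_ne_zero, not_false_eq_true, zero_pow]

theorem integral_add_le_of_le_capacity (h : IsBICMechanism C qv qc) {m β : ℝ} (hm : 0 ≤ m)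
    (hmC : m ≤ C) (hβ : ∀ s ∈ Icc 0 m, qv s ≤ β) :
    ∫ s in (0 : ℝ)..m, (qv s + qc s) ≤ C * qc m + β * (m ^ 2 / (2 * C)) := by
  have hC := h.capacity_pos
  have hqc := h.integral_qc_le hm hβ
  set K := C * qc m - ∫ s in (0 : ℝ)..m, qv s
  have hK0 : 0 ≤ K := by
    have := h.bic.integral_qv_le hC h.isAllocationRule_v le_rfl hm
    have := mul_nonneg hC.le (h.isAllocationRule_c.nonneg 0)
    linarith
  have hmK : m * K ≤ C * K := mul_le_mul_of_nonneg_right hmC hK0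
  have hqc' : ∫ s in (0 : ℝ)..m, qc s ≤ K + β * (m ^ 2 / (2 * C)) := by
    refine le_of_mul_le_mul_left ?_ hC
    calc C * ∫ s in (0 : ℝ)..m, qc s ≤ C * K + β * (m ^ 2 / 2) := by linarith
      _ = C * (K + β * (m ^ 2 / (2 * C))) := by field_simp
  rw [intervalIntegral.integral_add (h.isAllocationRule_v.intervalIntegrable 0 m)
    (h.isAllocationRule_c.intervalIntegrable 0 m)]
  linarith

theorem integral_add_le (h : IsBICMechanism C qv qc) {m v : ℝ} (hm : 0 ≤ m) (hmv : m ≤ v) :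
    ∫ s in m..v, (qv s + qc s) ≤ C * qc v - C * qc m + (v - m) * (qv v + qc v) := by
  have hiv := h.isAllocationRule_v.intervalIntegrable m v
  have hic := h.isAllocationRule_c.intervalIntegrable m v
  have hqv := h.bic.integral_qv_le h.capacity_pos h.isAllocationRule_v hm hmv
  have hqc : ∫ s in m..v, qc s ≤ ∫ _ in m..v, qc v :=
    intervalIntegral.integral_mono_on hmv hic intervalIntegrable_const fun s hs =>
      h.bic.monotoneOn_qc h.capacity_pos h.isAllocationRule_v.nonneg (hm.trans hs.1)
        (hm.trans hmv) hs.2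
  rw [intervalIntegral.integral_const, smul_eq_mul] at hqc
  rw [intervalIntegral.integral_add hiv hic]
  linarith [mul_nonneg (sub_nonneg.2 hmv) (h.isAllocationRule_v.nonneg v)]

theorem revenue_le_payment_add (h : IsBICMechanism C qv qc) {v : ℝ} (hv : 0 ≤ v) :
    v * (qv v + qc v) - C * qc v ≤
      payment (fun t => qv t + qc t) v + payment (auxRule C qv) v +
        max (v - C) 0 * (qv v + qc v) := by
  have hm : 0 ≤ min v C := le_min hv h.capacity_pos.le
  have hi := h.isAllocationRule_add.intervalIntegrable
  have hbelow := h.integral_add_le_of_le_capacity hm (min_le_right v C) fun s hs =>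
    le_runningSup h.bddAbove_range_qv hs.1 (hs.2.trans (min_le_left v C))
  have habove := h.integral_add_le hm (min_le_left v C)
  have haux := h.le_payment_auxRule hv
  have hexcess : max (v - C) 0 = v - min v C := by
    rw [← max_sub_sub_left, sub_self, max_comm]
  rw [hexcess, payment,
    ← intervalIntegral.integral_add_adjacent_intervals (hi 0 (min v C)) (hi _ v)]
  linarith

end IsBICMechanism

/-- The law on `[0, ∞)` with density `f`. -/
noncomputable def valueLaw (f : ℝ → ℝ) : Measure ℝ :=
  (volume.restrict (Ici (0 : ℝ))).withDensity fun t => ENNReal.ofReal (f t)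

/-- The density of a value distribution: a probability density on `[0, ∞)` with finite mean.
The values of `f` on the negative half-line are ignored. -/
structure IsValueDensity (f : ℝ → ℝ) : Prop where
  measurable : Measurable f
  nonneg : ∀ t, 0 ≤ t → 0 ≤ f t
  isProbabilityMeasure : IsProbabilityMeasure (valueLaw f)
  integrableOn_mean : IntegrableOn (fun t => t * f t) (Ici 0)

/-- The reciprocal `(1 - F) / f` of the hazard rate; it is `0` wherever `f` vanishes. -/
noncomputable def inverseHazard (f : ℝ → ℝ) (t : ℝ) : ℝ := (1 - ∫ s in (0 : ℝ)..t, f s) / f t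

/-- Myerson's virtual value `φ(t) = t - (1 - F t) / f t`. -/
noncomputable def virtualValue (f : ℝ → ℝ) (t : ℝ) : ℝ := t - inverseHazard f t

theorem ae_valueLaw_nonneg (f : ℝ → ℝ) : ∀ᵐ t ∂valueLaw f, 0 ≤ t :=
  (withDensity_absolutelyContinuous _ _).ae_le (ae_restrict_mem measurableSet_Ici)

namespace IsValueDensity

variable {f : ℝ → ℝ}

theorem integrable_id (hf : IsValueDensity f) : Integrable (fun t : ℝ => t) (valueLaw f) := by
  refine (integrable_withDensity_iff hf.measurable.ennreal_ofReal
    (.of_forall fun _ => ENNReal.ofReal_lt_top)).2 (hf.integrableOn_mean.congr_fun ?_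
      measurableSet_Ici)
  intro t ht
  simp only [ENNReal.toReal_ofReal (hf.nonneg t ht)]

theorem one_sub_integral_eq_real_Ioi (hf : IsValueDensity f) {t : ℝ} (ht : 0 ≤ t) :
    1 - ∫ s in (0 : ℝ)..t, f s = (valueLaw f).real (Ioi t) := by
  have := hf.isProbabilityMeasure
  have hcdf : (valueLaw f).real (Iic t) = ∫ s in (0 : ℝ)..t, f s := by
    rw [intervalIntegral.integral_of_le ht, ← integral_Icc_eq_integral_Ioc,
      integral_eq_lintegral_of_nonneg_ae _ hf.measurable.aestronglyMeasurable, measureReal_def,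
      valueLaw, withDensity_apply _ measurableSet_Iic,
      Measure.restrict_restrict measurableSet_Iic, Iic_inter_Ici]
    filter_upwards [ae_restrict_mem measurableSet_Icc] with s hs using hf.nonneg s hs.1
  rw [← hcdf, ← compl_Iic, probReal_compl_eq_one_sub measurableSet_Iic]

theorem inverseHazard_nonneg (hf : IsValueDensity f) {t : ℝ} (ht : 0 ≤ t) :
    0 ≤ inverseHazard f t :=
  div_nonneg (hf.one_sub_integral_eq_real_Ioi ht ▸ measureReal_nonneg) (hf.nonneg t ht)

theorem aemeasurable_inverseHazard (hf : IsValueDensity f) :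
    AEMeasurable (inverseHazard f) (valueLaw f) := by
  have := hf.isProbabilityMeasure
  have htail : Antitone fun t => (valueLaw f).real (Ioi t) := fun _ _ hab =>
    measureReal_mono (Ioi_subset_Ioi hab)
  refine (htail.measurable.div hf.measurable).aemeasurable.congr ?_
  filter_upwards [ae_valueLaw_nonneg f] with t ht
  simp only [Pi.div_apply, inverseHazard, hf.one_sub_integral_eq_real_Ioi ht]

theorem integrable_virtualValue_posPart (hf : IsValueDensity f) :
    Integrable (fun t => max (virtualValue f t) 0) (valueLaw f) := by
  have hmeas := (aemeasurable_id.sub hf.aemeasurable_inverseHazard).max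
    (aemeasurable_const (b := (0 : ℝ)))
  refine hf.integrable_id.mono' hmeas.aestronglyMeasurable ?_
  filter_upwards [ae_valueLaw_nonneg f] with t ht
  rw [Real.norm_of_nonneg (le_max_right _ _)]
  exact max_le (sub_le_self t (hf.inverseHazard_nonneg ht)) ht

theorem integrable_excess (hf : IsValueDensity f) (C : ℝ) :
    Integrable (fun t => max (t - C) 0) (valueLaw f) := by
  have := hf.isProbabilityMeasure
  exact (hf.integrable_id.sub (integrable_const C)).pos_part

/-- By the layer cake formula the right-hand side is `∫ (1 - F) * x` over `[0, ∞)`; the left-hand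
side is the same integral over the set where `f > 0`. -/
theorem lintegral_inverseHazard_mul_le (hf : IsValueDensity f) {x : ℝ → ℝ} (hx0 : ∀ t, 0 ≤ x t)
    (hx : ∀ t > 0, IntervalIntegrable x volume 0 t) :
    ∫⁻ t, ENNReal.ofReal (inverseHazard f t * x t) ∂valueLaw f ≤
      ∫⁻ t, ENNReal.ofReal (∫ s in (0 : ℝ)..t, x s) ∂valueLaw f := by
  have := hf.isProbabilityMeasure
  have hcancel : ∀ t ∈ Ici (0 : ℝ),
      ENNReal.ofReal (f t) * ENNReal.ofReal (inverseHazard f t * x t) ≤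
        valueLaw f (Ioi t) * ENNReal.ofReal (x t) := by
    intro t ht
    rw [← ofReal_measureReal, ← ENNReal.ofReal_mul (hf.nonneg t ht),
      ← ENNReal.ofReal_mul measureReal_nonneg, ← mul_assoc, inverseHazard,
      hf.one_sub_integral_eq_real_Ioi ht]
    refine ENNReal.ofReal_le_ofReal (mul_le_mul_of_nonneg_right ?_ (hx0 t))
    rcases eq_or_ne (f t) 0 with hft | hft
    · simp only [hft, zero_mul, measureReal_nonneg]
    · exact (mul_div_cancel₀ _ hft).le
  calc ∫⁻ t, ENNReal.ofReal (inverseHazard f t * x t) ∂valueLaw f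
      = ∫⁻ t in Ici 0, ENNReal.ofReal (f t) * ENNReal.ofReal (inverseHazard f t * x t) :=
        lintegral_withDensity_eq_lintegral_mul_non_measurable _ hf.measurable.ennreal_ofReal
          (.of_forall fun _ => ENNReal.ofReal_lt_top) _
    _ ≤ ∫⁻ t in Ici 0, valueLaw f (Ioi t) * ENNReal.ofReal (x t) :=
        setLIntegral_mono' measurableSet_Ici hcancel
    _ = ∫⁻ t in Ioi 0, valueLaw f (Ioi t) * ENNReal.ofReal (x t) := by
        rw [restrict_Ioi_eq_restrict_Ici]
    _ = ∫⁻ t, ENNReal.ofReal (∫ s in (0 : ℝ)..t, x s) ∂valueLaw f :=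
        (lintegral_comp_eq_lintegral_meas_lt_mul _ (ae_valueLaw_nonneg f) aemeasurable_id hx
          (.of_forall hx0)).symm

section Allocation

variable {x : ℝ → ℝ}

theorem integrable_intervalIntegral (hf : IsValueDensity f) (hx : IsAllocationRule x) :
    Integrable (fun t => ∫ s in (0 : ℝ)..t, x s) (valueLaw f) := by
  refine hf.integrable_id.mono'
    (intervalIntegral.continuous_primitive hx.intervalIntegrable 0).aestronglyMeasurable ?_
  filter_upwards [ae_valueLaw_nonneg f] with t ht
  rw [Real.norm_of_nonneg (intervalIntegral.integral_nonneg ht fun s _ => hx.nonneg s)]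
  simpa using intervalIntegral.integral_mono_on ht (hx.intervalIntegrable 0 t)
    (intervalIntegrable_const (c := (1 : ℝ))) fun s _ => hx.le_one s

theorem integrable_payment (hf : IsValueDensity f) (hx : IsAllocationRule x) :
    Integrable (payment x) (valueLaw f) :=
  (hx.integrable_mul hf.integrable_id).sub (hf.integrable_intervalIntegral hx)

theorem integrable_and_integral_inverseHazard_mul_le (hf : IsValueDensity f)
    (hx : IsAllocationRule x) :
    Integrable (fun t => inverseHazard f t * x t) (valueLaw f) ∧
      ∫ t, inverseHazard f t * x t ∂valueLaw f ≤
        ∫ t, (∫ s in (0 : ℝ)..t, x s) ∂valueLaw f := by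
  have hprim := hf.integrable_intervalIntegral hx
  have hle := hf.lintegral_inverseHazard_mul_le hx.nonneg fun t _ => hx.intervalIntegrable 0 t
  have hmeas : AEStronglyMeasurable (fun t => inverseHazard f t * x t) (valueLaw f) :=
    (hf.aemeasurable_inverseHazard.mul hx.measurable.aemeasurable).aestronglyMeasurable
  have hhaz0 : 0 ≤ᵐ[valueLaw f] fun t => inverseHazard f t * x t := by
    filter_upwards [ae_valueLaw_nonneg f] with t ht
    exact mul_nonneg (hf.inverseHazard_nonneg ht) (hx.nonneg t)
  have hprim0 : 0 ≤ᵐ[valueLaw f] fun t => ∫ s in (0 : ℝ)..t, x s := by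
    filter_upwards [ae_valueLaw_nonneg f] with t ht
    exact intervalIntegral.integral_nonneg ht fun s _ => hx.nonneg s
  have hfinite := (lintegral_ofReal_ne_top_iff_integrable hprim.aestronglyMeasurable hprim0).2 hprim
  refine ⟨(lintegral_ofReal_ne_top_iff_integrable hmeas hhaz0).1
    (ne_top_of_le_ne_top hfinite hle), ?_⟩
  rw [integral_eq_lintegral_of_nonneg_ae hhaz0 hmeas,
    integral_eq_lintegral_of_nonneg_ae hprim0 hprim.aestronglyMeasurable]
  exact ENNReal.toReal_mono hfinite hle

theorem integral_payment_le (hf : IsValueDensity f) (hx : IsAllocationRule x) {q : ℝ → ℝ}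
    (hq : IsAllocationRule q) (hxq : ∀ t, x t ≤ q t) :
    ∫ t, payment x t ∂valueLaw f ≤ ∫ t, max (virtualValue f t) 0 * q t ∂valueLaw f := by
  obtain ⟨hhaz, hle⟩ := hf.integrable_and_integral_inverseHazard_mul_le hx
  have hid := hx.integrable_mul hf.integrable_id
  calc ∫ t, payment x t ∂valueLaw f
      = ∫ t, t * x t ∂valueLaw f - ∫ t, (∫ s in (0 : ℝ)..t, x s) ∂valueLaw f :=
        integral_sub hid (hf.integrable_intervalIntegral hx)
    _ ≤ ∫ t, t * x t ∂valueLaw f - ∫ t, inverseHazard f t * x t ∂valueLaw f :=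
        sub_le_sub_left hle _
    _ = ∫ t, (t * x t - inverseHazard f t * x t) ∂valueLaw f := (integral_sub hid hhaz).symm
    _ ≤ ∫ t, max (virtualValue f t) 0 * q t ∂valueLaw f := by
        refine integral_mono (hid.sub hhaz)
          (hq.integrable_mul hf.integrable_virtualValue_posPart) fun t => ?_
        rw [← sub_mul]
        exact mul_le_mul (le_max_left _ _) (hxq t) (hx.nonneg t) (le_max_right _ _)

end Allocation

theorem integral_revenue_le (hf : IsValueDensity f) {C : ℝ} {qv qc : ℝ → ℝ}
    (h : IsBICMechanism C qv qc) :
    ∫ t, (t * (qv t + qc t) - C * qc t) ∂valueLaw f ≤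
      2 * ∫ t, max (virtualValue f t) 0 * (qv t + qc t) ∂valueLaw f +
        ∫ t, max (t - C) 0 * (qv t + qc t) ∂valueLaw f := by
  have := hf.isProbabilityMeasure
  have hq := h.isAllocationRule_add
  have haux := h.isAllocationRule_auxRule
  have hrev : Integrable (fun t => t * (qv t + qc t) - C * qc t) (valueLaw f) :=
    (hq.integrable_mul hf.integrable_id).sub
      (h.isAllocationRule_c.integrable_mul (integrable_const C))
  have hpay := (hf.integrable_payment hq).add (hf.integrable_payment haux)
  have hexcess := hq.integrable_mul (hf.integrable_excess C)
  have hle := integral_mono_ae hrev (hpay.add hexcess)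
    (by filter_upwards [ae_valueLaw_nonneg f] with t ht using h.revenue_le_payment_add ht)
  rw [integral_add' hpay hexcess,
    integral_add' (hf.integrable_payment hq) (hf.integrable_payment haux)] at hle
  linarith [hf.integral_payment_le hq hq fun _ => le_rfl,
    hf.integral_payment_le haux hq h.auxRule_le_add]

end IsValueDensity

theorem integrable_iSup {ι α : Type*} [Finite ι] [MeasurableSpace α] {μ : Measure α} {h : ι → α → ℝ}
    (hi : ∀ i, Integrable (h i) μ) (h0 : ∀ i a, 0 ≤ h i a) :
    Integrable (fun a => ⨆ i, h i a) μ := by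
  have := Fintype.ofFinite ι
  refine (integrable_finsetSum Finset.univ fun i _ => hi i).mono'
    (AEMeasurable.iSup fun i => (hi i).aemeasurable).aestronglyMeasurable (.of_forall fun a => ?_)
  rw [Real.norm_of_nonneg (Real.iSup_nonneg fun i => h0 i a)]
  exact Real.iSup_le (fun i => Finset.single_le_sum (f := fun i => h i a)
    (fun j _ => h0 j a) (Finset.mem_univ i)) (Finset.sum_nonneg fun j _ => h0 j a)

section Product

variable {ι : Type*} [DecidableEq ι] {X : ι → Type*} [∀ i, MeasurableSpace (X i)]

/-- The interim rule of agent `i`: the expected value of `P` when `i` reports `t` and the other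
reports are drawn from `μ`. -/
noncomputable def interim (μ : Measure (∀ i, X i)) (P : (∀ i, X i) → ℝ) (i : ι) (t : X i) : ℝ :=
  ∫ w, P (Function.update w i t) ∂μ

theorem IsAllocationRule.interim {μ : Measure (∀ i, X i)} [IsProbabilityMeasure μ]
    {P : (∀ i, X i) → ℝ} (hP : IsAllocationRule P) (i : ι) : IsAllocationRule (interim μ P i) where
  measurable := (hP.measurable.comp (measurable_update'.comp
    measurable_swap)).stronglyMeasurable.integral_prod_right'.measurable
  nonneg _ := (hP.comp measurable_update_left).integral_mem_Icc.1
  le_one _ := (hP.comp measurable_update_left).integral_mem_Icc.2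

theorem interim_add {μ : Measure (∀ i, X i)} [IsFiniteMeasure μ] {P Q : (∀ i, X i) → ℝ}
    (hP : IsAllocationRule P) (hQ : IsAllocationRule Q) (i : ι) (t : X i) :
    interim μ (fun w => P w + Q w) i t = interim μ P i t + interim μ Q i t :=
  integral_add (hP.comp measurable_update_left).integrable
    (hQ.comp measurable_update_left).integrable

variable [Fintype ι] {ν : ∀ i, Measure (X i)} [∀ i, IsProbabilityMeasure (ν i)]

theorem measurePreserving_update_pi (i : ι) :
    MeasurePreserving (fun p : X i × (∀ j, X j) => Function.update p.2 i p.1)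
      ((ν i).prod (Measure.pi ν)) (Measure.pi ν) := by
  have hm : Measurable fun p : X i × (∀ j, X j) => Function.update p.2 i p.1 :=
    measurable_update'.comp measurable_swap
  refine ⟨hm, (Measure.pi_eq fun s hs => ?_).symm⟩
  have hpre : (fun p : X i × (∀ j, X j) => Function.update p.2 i p.1) ⁻¹' univ.pi s =
      s i ×ˢ univ.pi (Function.update s i univ) := by
    ext p
    simp [mem_pi, Function.forall_update_iff p.2 (p := fun j a => a ∈ s j),
      Function.forall_update_iff s (p := fun j t => p.2 j ∈ t)]
  rw [Measure.map_apply hm (MeasurableSet.univ_pi hs), hpre, Measure.prod_prod, Measure.pi_pi,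
    ← Finset.mul_prod_erase _ _ (Finset.mem_univ i),
    ← Finset.mul_prod_erase Finset.univ (fun j => ν j (s j)) (Finset.mem_univ i),
    Function.update_self, measure_univ, one_mul]
  congr 1
  exact Finset.prod_congr rfl fun j hj => by rw [Function.update_of_ne (Finset.ne_of_mem_erase hj)]

theorem integral_mul_interim {i : ι} {g : X i → ℝ} (hg : Integrable g (ν i))
    {P : (∀ j, X j) → ℝ} (hP : IsAllocationRule P) :
    ∫ t, g t * interim (Measure.pi ν) P i t ∂ν i = ∫ w, g (w i) * P w ∂Measure.pi ν := by
  have hupdate := measurePreserving_update_pi (ν := ν) i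
  have hint : Integrable (fun w : ∀ j, X j => g (w i) * P w) (Measure.pi ν) :=
    hP.integrable_mul (integrable_comp_eval hg)
  have hprod := hupdate.integrable_comp_of_integrable hint
  simp only [Function.comp_def, Function.update_self] at hprod
  calc ∫ t, g t * interim (Measure.pi ν) P i t ∂ν i
      = ∫ t, ∫ w, g t * P (Function.update w i t) ∂Measure.pi ν ∂ν i := by
        simp only [interim, integral_const_mul]
    _ = ∫ p, g p.1 * P (Function.update p.2 i p.1) ∂(ν i).prod (Measure.pi ν) :=
        (integral_prod _ hprod).symm
    _ = ∫ w, g (w i) * P w ∂Measure.pi ν := by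
        conv_rhs => rw [← hupdate.map_eq]
        rw [integral_map hupdate.measurable.aemeasurable
          (hupdate.map_eq.symm ▸ hint.aestronglyMeasurable)]
        simp only [Function.update_self]

theorem sum_integral_mul_interim_le {g : ∀ i, X i → ℝ} (hg : ∀ i, Integrable (g i) (ν i))
    (hg0 : ∀ i t, 0 ≤ g i t) {P : ι → (∀ i, X i) → ℝ} (hP : ∀ i, IsAllocationRule (P i))
    (hfeas : ∀ w, ∑ i, P i w ≤ 1) :
    ∑ i, ∫ t, g i t * interim (Measure.pi ν) (P i) i t ∂ν i ≤
      ∫ w, (⨆ i, g i (w i)) ∂Measure.pi ν := by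
  have hgi : ∀ i, Integrable (fun w : ∀ i, X i => g i (w i)) (Measure.pi ν) := fun i =>
    integrable_comp_eval (hg i)
  have hint := fun i => (hP i).integrable_mul (hgi i)
  calc ∑ i, ∫ t, g i t * interim (Measure.pi ν) (P i) i t ∂ν i
      = ∫ w, ∑ i, g i (w i) * P i w ∂Measure.pi ν := by
        simp only [fun i => integral_mul_interim (hg i) (hP i)]
        exact (integral_finsetSum _ fun i _ => hint i).symm
    _ ≤ ∫ w, (⨆ i, g i (w i)) ∂Measure.pi ν := by
        refine integral_mono (integrable_finsetSum _ fun i _ => hint i)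
          (integrable_iSup hgi fun i w => hg0 i (w i)) fun w => ?_
        calc ∑ i, g i (w i) * P i w ≤ ∑ i, (⨆ j, g j (w j)) * P i w :=
              Finset.sum_le_sum fun i _ => mul_le_mul_of_nonneg_right
                (le_ciSup (f := fun j => g j (w j)) (finite_range _).bddAbove i) ((hP i).nonneg w)
          _ = (⨆ j, g j (w j)) * ∑ i, P i w := (Finset.mul_sum _ _ _).symm
          _ ≤ ⨆ j, g j (w j) :=
              mul_le_of_le_one_right (Real.iSup_nonneg fun i => hg0 i (w i)) (hfeas w)

end Product

end TwoPricedAuction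

open TwoPricedAuction in
theorem three_approx_by_simple_benchmarks_general {ι : Type*} [Fintype ι] [DecidableEq ι]
    {C : ι → ℝ} (hC : ∀ i, 0 < C i) {f : ι → ℝ → ℝ} (hf : ∀ i, IsValueDensity (f i))
    {μ : Measure (ι → ℝ)} (hμ : μ = Measure.pi fun i => valueLaw (f i))
    {Pv Pc : ι → (ι → ℝ) → ℝ} (hPv : ∀ i, IsAllocationRule (Pv i))
    (hPc : ∀ i, IsAllocationRule (Pc i)) (hfeas : ∀ w, ∑ i, (Pv i w + Pc i w) ≤ 1)
    (hBIC : ∀ i, IsTwoPricedBIC (C i) (interim μ (Pv i) i) (interim μ (Pc i) i)) :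
    (∑ i, ∫ t, (t * (interim μ (Pv i) i t + interim μ (Pc i) i t) - C i * interim μ (Pc i) i t)
        ∂valueLaw (f i)) ≤
        2 * (∫ w, (⨆ i, max (virtualValue (f i) (w i)) 0) ∂μ) +
          (∫ w, (⨆ i, max (w i - C i) 0) ∂μ) ∧
      (∑ i, ∫ t, (t * (interim μ (Pv i) i t + interim μ (Pc i) i t) - C i * interim μ (Pc i) i t)
        ∂valueLaw (f i)) ≤
        3 * max (∫ w, (⨆ i, max (virtualValue (f i) (w i)) 0) ∂μ)
          (∫ w, (⨆ i, max (w i - C i) 0) ∂μ) := by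
  have := fun i => (hf i).isProbabilityMeasure
  have : IsProbabilityMeasure μ := hμ ▸ inferInstance
  have hP : ∀ i, IsAllocationRule fun w => Pv i w + Pc i w :=
    IsAllocationRule.of_sum_le_one (fun i => (hPv i).measurable.add (hPc i).measurable)
      (fun i w => add_nonneg ((hPv i).nonneg w) ((hPc i).nonneg w)) hfeas
  have hq : ∀ i t, interim μ (fun w => Pv i w + Pc i w) i t =
      interim μ (Pv i) i t + interim μ (Pc i) i t := fun i => interim_add (hPv i) (hPc i) i
  have hmech : ∀ i, IsBICMechanism (C i) (interim μ (Pv i) i) (interim μ (Pc i) i) := fun i =>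
    ⟨hC i, (hPv i).interim i, (hPc i).interim i,
      fun t => hq i t ▸ ((hP i).interim (μ := μ) i).le_one t, hBIC i⟩
  have hrev := Finset.sum_le_sum fun i (_ : i ∈ Finset.univ) => (hf i).integral_revenue_le (hmech i)
  have hvirtual := sum_integral_mul_interim_le
    (fun i => (hf i).integrable_virtualValue_posPart) (fun _ _ => le_max_right _ _) hP hfeas
  have hexcess := sum_integral_mul_interim_le
    (fun i => (hf i).integrable_excess (C i)) (fun _ _ => le_max_right _ _) hP hfeas
  rw [Finset.sum_add_distrib, ← Finset.mul_sum] at hrev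
  simp only [← hμ, hq] at hvirtual hexcess
  have hmax : ∀ a b : ℝ, 2 * a + b ≤ 3 * max a b := fun a b => by
    linarith [le_max_left a b, le_max_right a b]
  have hbound := hrev.trans (add_le_add (mul_le_mul_of_nonneg_left hvirtual zero_le_two) hexcess)
  exact ⟨hbound, hbound.trans (hmax _ _)⟩

/-- For `n` agents with capacities `C_i > 0` and independent values
`V_i` with CDF `F_i`, density `f_i > 0`, and finite mean, every BIC `n`-agent
two-priced auction has expected revenue at most
`2·E[max_i φ_i⁺(V_i)] + E[max_i (V_i − C_i)⁺]`, and in particular at most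
`3·max(E[max_i φ_i⁺(V_i)], E[max_i (V_i − C_i)⁺])`. -/
theorem three_approx_by_simple_benchmarks
    (n : ℕ) (C : Fin n → ℝ) (hC : ∀ i, 0 < C i)
    (f F : Fin n → ℝ → ℝ)
    (hfm : ∀ i, Measurable (f i))
    (hfpos : ∀ i t, 0 ≤ t → 0 < f i t)
    (hF : ∀ i t, F i t = ∫ s in (0 : ℝ)..t, f i s)
    (ν : Fin n → Measure ℝ)
    (hν : ∀ i, ν i =
      (volume.restrict (Ici (0 : ℝ))).withDensity fun t => ENNReal.ofReal (f i t))
    (hprob : ∀ i, IsProbabilityMeasure (ν i))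
    (hmean : ∀ i, IntegrableOn (fun t => t * f i t) (Ici 0))
    (μ : Measure (Fin n → ℝ)) (hμ : μ = Measure.pi ν)
    (Pv Pc : Fin n → (Fin n → ℝ) → ℝ)
    (hPvm : ∀ i, Measurable (Pv i)) (hPcm : ∀ i, Measurable (Pc i))
    (hPv01 : ∀ i w, Pv i w ∈ Icc (0 : ℝ) 1)
    (hPc01 : ∀ i w, Pc i w ∈ Icc (0 : ℝ) 1)
    (hfeas : ∀ w, (∑ i, (Pv i w + Pc i w)) ≤ 1)
    (qv qc : Fin n → ℝ → ℝ)
    (hqv : ∀ i t, qv i t = ∫ w, Pv i (Function.update w i t) ∂μ)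
    (hqc : ∀ i t, qc i t = ∫ w, Pc i (Function.update w i t) ∂μ)
    (hBIC : ∀ i, ∀ v, 0 ≤ v → ∀ v', 0 ≤ v' →
      qv i v * min 0 (C i) + qc i v * C i ≥
        qv i v' * min (v - v') (C i) + qc i v' * min (v - v' + C i) (C i))
    (φ : Fin n → ℝ → ℝ)
    (hφ : ∀ i v, φ i v = v - (1 - F i v) / f i v) :
    (∑ i, ∫ t, (t * (qv i t + qc i t) - C i * qc i t) ∂(ν i)) ≤
        2 * (∫ w, (⨆ i, max (φ i (w i)) 0) ∂μ) +
          (∫ w, (⨆ i, max (w i - C i) 0) ∂μ) ∧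
      (∑ i, ∫ t, (t * (qv i t + qc i t) - C i * qc i t) ∂(ν i)) ≤
        3 * max (∫ w, (⨆ i, max (φ i (w i)) 0) ∂μ)
          (∫ w, (⨆ i, max (w i - C i) 0) ∂μ) := by
  obtain rfl : ν = fun i => TwoPricedAuction.valueLaw (f i) := funext hν
  obtain rfl : F = fun i t => ∫ s in (0 : ℝ)..t, f i s := funext₂ hF
  obtain rfl : qv = fun i => TwoPricedAuction.interim μ (Pv i) i := funext₂ hqv
  obtain rfl : qc = fun i => TwoPricedAuction.interim μ (Pc i) i := funext₂ hqc
  obtain rfl : φ = fun i => TwoPricedAuction.virtualValue (f i) := funext₂ hφ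
  exact three_approx_by_simple_benchmarks_general hC
    (fun i => ⟨hfm i, fun t ht => (hfpos i t ht).le, hprob i, hmean i⟩) hμ
    (fun i => ⟨hPvm i, fun w => (hPv01 i w).1, fun w => (hPv01 i w).2⟩)
    (fun i => ⟨hPcm i, fun w => (hPc01 i w).1, fun w => (hPc01 i w).2⟩) hfeas hBIC
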